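/- Let n ≥ 2 and let U = I₁×⋯×Iₙ ⊆ ℝⁿ be an open box carrying a diagonal metric with smooth positive Lamé coefficients H₁,…,Hₙ, h = H₁⋯Hₙ, and Δψ = h⁻¹ ∑ᵢ ∂ᵢ((h/Hᵢ²)∂ᵢψ). Let V : U → ℝ be continuous, k ∈ ℝ, R : U → ℝ smooth and nowhere zero, and pᵢ, qᵢ : Iᵢ → ℝ continuous. Suppose that for EVERY choice of C² functions φᵢ : Iᵢ → ℝ satisfying φᵢ'' + pᵢφᵢ' + qᵢφᵢ = 0 the function ψ(u) = R(u)·∏ᵢ φᵢ(uⁱ) satisfies Δψ + (k² − V)ψ = 0 on U. Then for each i, ∂ᵢ ln(R² h/Hᵢ²)(u) = pᵢ(uⁱ) on U (and hence ∂ᵢ∂ⱼ ln(R² h/Hᵢ²) = 0 for all j ≠ i), and the R-equation ΔR + (k² − V − ∑ᵢ qᵢ/Hᵢ²)R = 0 holds on U. -/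

import Mathlib

/-- The partial derivative of `f : ℝⁿ → ℝ` in the `i`-th coordinate direction,
taken as a line (directional) derivative. -/
noncomputable def pd {n : ℕ} (i : Fin n) (f : (Fin n → ℝ) → ℝ) (x : Fin n → ℝ) : ℝ :=
  lineDeriv ℝ f x (Pi.single i 1)

/-!
Freezing all coordinates but the `i`-th turns each term of `Δ` into a one-variable operator, for
which `(g (r φ)')' = (g r')' φ + g r (φ'' + (ln (r² g))' φ')`. Summing over `i`,

`Δ (R ∏ φᵢ) = ΔR ∏ φᵢ + R ∑ᵢ Hᵢ⁻² (φᵢ'' + ∂ᵢ ln (R² h / Hᵢ²) φᵢ') ∏_{l ≠ i} φₗ`.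

A linear equation with continuous coefficients has a solution on all of `Iᵢ` with prescribed value
and slope at a given point, since its Dyson series converges locally uniformly. So at a point `u` we
may take `φᵢ(uⁱ) = 1` and `φᵢ'(uⁱ) = dᵢ` with `d` arbitrary. After elimination of `φᵢ''` the
hypothesis says that an affine function of `d` vanishes identically: its constant term gives the
`R`-equation, and its linear coefficients are `R Hᵢ⁻² (∂ᵢ ln (R² h / Hᵢ²) - pᵢ)`.
-/

open Set Function Topology

lemma exists_mem_Ioo_Icc_subset {α : Type*} [LinearOrder α] [DenselyOrdered α]
    [NoMinOrder α] [NoMaxOrder α] [TopologicalSpace α] [OrderTopology α] {I : Set α}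
    (hIo : IsOpen I) (hIc : I.OrdConnected) {x y : α} (hx : x ∈ I) (hy : y ∈ I) :
    ∃ a b, x ∈ Ioo a b ∧ y ∈ Ioo a b ∧ Icc a b ⊆ I := by
  have hmin : min x y ∈ I := min_rec' (· ∈ I) hx hy
  have hmax : max x y ∈ I := max_rec' (· ∈ I) hx hy
  obtain ⟨a, haI, ha⟩ := (((hIo.eventually_mem hmin).filter_mono nhdsWithin_le_nhds).and
    (self_mem_nhdsWithin (s := Iio (min x y)))).exists
  obtain ⟨b, hbI, hb⟩ := (((hIo.eventually_mem hmax).filter_mono nhdsWithin_le_nhds).and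
    (self_mem_nhdsWithin (s := Ioi (max x y)))).exists
  rw [lt_min_iff] at ha
  rw [max_lt_iff] at hb
  exact ⟨a, b, ⟨ha.1, hb.1⟩, ⟨ha.2, hb.2⟩, hIc.out haI hbI⟩

section LinearODE

variable {E : Type*} [NormedAddCommGroup E] [NormedSpace ℝ E]

/-- The `m`-th term of the Dyson series, an `m`-fold iterated integral: the sum over `m` solves
`y' = A y`, `y t₀ = c`. -/
noncomputable def dysonTerm (A : ℝ → E →L[ℝ] E) (t₀ : ℝ) (c : E) : ℕ → ℝ → E
  | 0 => fun _ => c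
  | m + 1 => fun t => ∫ s in t₀..t, A s (dysonTerm A t₀ c m s)

variable {A : ℝ → E →L[ℝ] E} {I : Set ℝ} {t₀ : ℝ}

lemma norm_dysonTerm_le {K : ℝ} (hI : I.OrdConnected) (hK : ∀ t ∈ I, ‖A t‖ ≤ K) (ht₀ : t₀ ∈ I)
    (c : E) (m : ℕ) :
    ∀ t ∈ I, ‖dysonTerm A t₀ c m t‖ ≤ ‖c‖ * ((K * |t - t₀|) ^ m / m.factorial) := by
  have hK₀ : 0 ≤ K := (norm_nonneg _).trans (hK t₀ ht₀)
  induction m with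
  | zero => simp [dysonTerm]
  | succ m ih =>
    intro t ht
    have integrand_le : ∀ s ∈ uIoc t₀ t, ‖A s (dysonTerm A t₀ c m s)‖ ≤
        ‖c‖ * K ^ (m + 1) / m.factorial * |s - t₀| ^ m := fun s hs => by
      have hsI : s ∈ I := hI.uIcc_subset ht₀ ht (uIoc_subset_uIcc hs)
      calc ‖A s (dysonTerm A t₀ c m s)‖
          ≤ ‖A s‖ * ‖dysonTerm A t₀ c m s‖ := (A s).le_opNorm _
        _ ≤ K * (‖c‖ * ((K * |s - t₀|) ^ m / m.factorial)) := by
          gcongr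
          exacts [hK s hsI, ih s hsI]
        _ = ‖c‖ * K ^ (m + 1) / m.factorial * |s - t₀| ^ m := by ring
    calc ‖∫ s in t₀..t, A s (dysonTerm A t₀ c m s)‖
        ≤ |∫ s in t₀..t, ‖c‖ * K ^ (m + 1) / m.factorial * |s - t₀| ^ m| :=
          intervalIntegral.norm_integral_le_abs_of_norm_le
            ((MeasureTheory.ae_restrict_iff' measurableSet_uIoc).2 (.of_forall integrand_le))
            (Continuous.intervalIntegrable (by fun_prop) _ _)
      _ = ‖c‖ * K ^ (m + 1) / m.factorial * (|t - t₀| ^ (m + 1) / (m + 1)) := by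
          rw [intervalIntegral.integral_const_mul, abs_mul,
            intervalIntegral.abs_integral_eq_abs_integral_uIoc, integral_pow_abs_sub_uIoc,
            abs_of_nonneg (by positivity), abs_of_nonneg (by positivity)]
      _ = ‖c‖ * ((K * |t - t₀|) ^ (m + 1) / (m + 1).factorial) := by
          rw [Nat.factorial_succ]
          push_cast
          field_simp
          ring

lemma exists_summable_bound_dysonTerm {a b : ℝ} (hA : ContinuousOn A (Icc a b))
    (ht₀ : t₀ ∈ Icc a b) (c : E) :
    ∃ B : ℕ → ℝ, Summable B ∧ ∀ m, ∀ t ∈ Icc a b, ‖dysonTerm A t₀ c m t‖ ≤ B m := by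
  obtain ⟨K, hK⟩ := isCompact_Icc.exists_bound_of_continuousOn hA
  have hK₀ : 0 ≤ K := (norm_nonneg _).trans (hK t₀ ht₀)
  refine ⟨fun m => ‖c‖ * ((K * (b - a)) ^ m / m.factorial),
    (Real.summable_pow_div_factorial _).mul_left _, fun m t ht => ?_⟩
  refine (norm_dysonTerm_le ordConnected_Icc hK ht₀ c m t ht).trans ?_
  have : |t - t₀| ≤ b - a := abs_sub_le_of_le_of_le ht.1 ht.2 ht₀.1 ht₀.2
  dsimp only
  gcongr

variable [CompleteSpace E]

lemma hasDerivAt_integral_of_continuousOn (hIo : IsOpen I) (hIc : I.OrdConnected) {f : ℝ → E}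
    (hf : ContinuousOn f I) (ht₀ : t₀ ∈ I) {t : ℝ} (ht : t ∈ I) :
    HasDerivAt (fun t => ∫ s in t₀..t, f s) (f t) t :=
  intervalIntegral.integral_hasDerivAt_right
    (hf.mono (hIc.uIcc_subset ht₀ ht)).intervalIntegrable
    (hf.stronglyMeasurableAtFilter hIo t ht) (hf.continuousAt (hIo.mem_nhds ht))

lemma continuousOn_dysonTerm (hIo : IsOpen I) (hIc : I.OrdConnected) (hA : ContinuousOn A I)
    (ht₀ : t₀ ∈ I) (c : E) (m : ℕ) : ContinuousOn (dysonTerm A t₀ c m) I := by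
  induction m with
  | zero => exact continuousOn_const
  | succ m ih => exact HasDerivAt.continuousOn fun t ht =>
      hasDerivAt_integral_of_continuousOn hIo hIc (hA.clm_apply ih) ht₀ ht

lemma hasDerivAt_dysonTerm_succ (hIo : IsOpen I) (hIc : I.OrdConnected) (hA : ContinuousOn A I)
    (ht₀ : t₀ ∈ I) (c : E) (m : ℕ) {t : ℝ} (ht : t ∈ I) :
    HasDerivAt (dysonTerm A t₀ c (m + 1)) (A t (dysonTerm A t₀ c m t)) t :=
  hasDerivAt_integral_of_continuousOn hIo hIc
    (hA.clm_apply (continuousOn_dysonTerm hIo hIc hA ht₀ c m)) ht₀ ht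

lemma hasDerivAt_tsum_dysonTerm (hIo : IsOpen I) (hIc : I.OrdConnected) (hA : ContinuousOn A I)
    (ht₀ : t₀ ∈ I) (c : E) {t : ℝ} (ht : t ∈ I) :
    HasDerivAt (fun t => ∑' m, dysonTerm A t₀ c m t) (A t (∑' m, dysonTerm A t₀ c m t)) t := by
  obtain ⟨a, b, ht₀ab, htab, habI⟩ := exists_mem_Ioo_Icc_subset hIo hIc ht₀ ht
  obtain ⟨K, hK⟩ := isCompact_Icc.exists_bound_of_continuousOn (hA.mono habI)
  obtain ⟨B, hB, hTB⟩ :=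
    exists_summable_bound_dysonTerm (hA.mono habI) (Ioo_subset_Icc_self ht₀ab) c
  have summable_terms : ∀ s ∈ Ioo a b, Summable fun m => dysonTerm A t₀ c m s := fun s hs =>
    hB.of_norm_bounded fun m => hTB m s (Ioo_subset_Icc_self hs)
  have hasDerivAt_tail : HasDerivAt (fun s => ∑' m, dysonTerm A t₀ c (m + 1) s)
      (∑' m, A t (dysonTerm A t₀ c m t)) t :=
    hasDerivAt_tsum_of_isPreconnected (hB.mul_left K) isOpen_Ioo isPreconnected_Ioo
      (fun m s hs => hasDerivAt_dysonTerm_succ hIo hIc hA ht₀ c m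
        (habI (Ioo_subset_Icc_self hs)))
      (fun m s hs => (A s).le_of_opNorm_le_of_le (hK s (Ioo_subset_Icc_self hs))
        (hTB m s (Ioo_subset_Icc_self hs)))
      ht₀ab ((summable_nat_add_iff 1).2 (summable_terms t₀ ht₀ab)) htab
  rw [(A t).map_tsum (summable_terms t htab)]
  refine (hasDerivAt_tail.const_add c).congr_of_eventuallyEq ?_
  filter_upwards [isOpen_Ioo.mem_nhds htab] with s hs
  exact (summable_terms s hs).tsum_eq_zero_add

theorem exists_hasDerivAt_clm_apply (hIo : IsOpen I) (hIc : I.OrdConnected)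
    (hA : ContinuousOn A I) (ht₀ : t₀ ∈ I) (c : E) :
    ∃ y : ℝ → E, y t₀ = c ∧ ∀ t ∈ I, HasDerivAt y (A t (y t)) t := by
  refine ⟨fun t => ∑' m, dysonTerm A t₀ c m t, ?_,
    fun t ht => hasDerivAt_tsum_dysonTerm hIo hIc hA ht₀ c ht⟩
  refine (tsum_eq_single 0 fun m hm => ?_).trans rfl
  obtain ⟨k, rfl⟩ := Nat.exists_eq_succ_of_ne_zero hm
  exact intervalIntegral.integral_same

end LinearODE

lemma contDiffOn_two_of_hasDerivAt {F : Type*} [NormedAddCommGroup F] [NormedSpace ℝ F]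
    {I : Set ℝ} (hI : IsOpen I) {f f' f'' : ℝ → F}
    (hf : ∀ x ∈ I, HasDerivAt f (f' x) x) (hf' : ∀ x ∈ I, HasDerivAt f' (f'' x) x)
    (hf'' : ContinuousOn f'' I) : ContDiffOn ℝ 2 f I := by
  have hf'_C1 : ContDiffOn ℝ (0 + 1) f' I :=
    (contDiffOn_succ_iff_deriv_of_isOpen hI).2
      ⟨fun x hx => (hf' x hx).differentiableAt.differentiableWithinAt, by simp,
        contDiffOn_zero.2 (hf''.congr fun x hx => (hf' x hx).deriv)⟩
  rw [zero_add] at hf'_C1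
  rw [← one_add_one_eq_two]
  exact (contDiffOn_succ_iff_deriv_of_isOpen hI).2
    ⟨fun x hx => (hf x hx).differentiableAt.differentiableWithinAt, by simp,
      hf'_C1.congr fun x hx => (hf x hx).deriv⟩

theorem exists_contDiffOn_two_linear_ode {I : Set ℝ} (hIo : IsOpen I) (hIc : I.OrdConnected)
    {p q : ℝ → ℝ} (hp : ContinuousOn p I) (hq : ContinuousOn q I) {x₀ : ℝ} (hx₀ : x₀ ∈ I)
    (a b : ℝ) :
    ∃ φ : ℝ → ℝ, ContDiffOn ℝ 2 φ I ∧
      (∀ x ∈ I, deriv (deriv φ) x + p x * deriv φ x + q x * φ x = 0) ∧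
      φ x₀ = a ∧ deriv φ x₀ = b := by
  let fst := ContinuousLinearMap.fst ℝ ℝ ℝ
  let snd := ContinuousLinearMap.snd ℝ ℝ ℝ
  let A : ℝ → ℝ × ℝ →L[ℝ] ℝ × ℝ := fun x =>
    snd.prod 0 - p x • (0 : ℝ × ℝ →L[ℝ] ℝ).prod snd - q x • (0 : ℝ × ℝ →L[ℝ] ℝ).prod fst
  have hA : ContinuousOn A I := by fun_prop
  obtain ⟨y, hy₀, hy⟩ := exists_hasDerivAt_clm_apply hIo hIc hA hx₀ (a, b)
  have hφ : ∀ x ∈ I, HasDerivAt (fun x => (y x).1) (y x).2 x := fun x hx => by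
    simpa [A, fst, snd, comp_def] using fst.hasFDerivAt.comp_hasDerivAt x (hy x hx)
  have hφ' : ∀ x ∈ I, HasDerivAt (fun x => (y x).2) (-p x * (y x).2 - q x * (y x).1) x :=
    fun x hx => by simpa [A, fst, snd, comp_def] using snd.hasFDerivAt.comp_hasDerivAt x (hy x hx)
  have deriv_φ : EqOn (deriv fun x => (y x).1) (fun x => (y x).2) I := fun x hx => (hφ x hx).deriv
  refine ⟨fun x => (y x).1, contDiffOn_two_of_hasDerivAt hIo hφ hφ' ?_, fun x hx => ?_, ?_, ?_⟩
  · have := HasDerivAt.continuousOn hφ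
    have := HasDerivAt.continuousOn hφ'
    fun_prop
  · rw [deriv_φ.deriv hIo hx, deriv_φ hx, (hφ' x hx).deriv]
    ring
  · simp [hy₀]
  · simp [deriv_φ hx₀, hy₀]

lemma deriv_mul_deriv_mul {𝕜 : Type*} [NontriviallyNormedField 𝕜] {g r φ : 𝕜 → 𝕜} {x : 𝕜}
    (hg : DifferentiableAt 𝕜 g x) (hr : ContDiffAt 𝕜 2 r x) (hφ : ContDiffAt 𝕜 2 φ x)
    (hgx : g x ≠ 0) (hrx : r x ≠ 0) :
    deriv (fun t => g t * deriv (fun s => r s * φ s) t) x =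
      deriv (fun t => g t * deriv r t) x * φ x +
        g x * r x * (deriv (deriv φ) x + logDeriv (fun t => r t ^ 2 * g t) x * deriv φ x) := by
  have hasDerivAt_self {f : 𝕜 → 𝕜} {t : 𝕜} (hf : ContDiffAt 𝕜 2 f t) :
      HasDerivAt f (deriv f t) t := (hf.differentiableAt two_ne_zero).hasDerivAt
  have hasDerivAt_deriv {f : 𝕜 → 𝕜} (hf : ContDiffAt 𝕜 2 f x) :
      HasDerivAt (deriv f) (deriv (deriv f) x) x :=
    ((hf.derivWithin (m := 1) (by norm_num)).differentiableAt one_ne_zero).hasDerivAt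
  have product_rule : (fun t => g t * deriv (fun s => r s * φ s) t) =ᶠ[𝓝 x]
      fun t => g t * deriv r t * φ t + g t * r t * deriv φ t := by
    filter_upwards [hr.eventually (by simp), hφ.eventually (by simp)] with t hrt hφt
    rw [((hasDerivAt_self hrt).fun_mul (hasDerivAt_self hφt)).deriv]
    ring
  have h_log : logDeriv (fun t => r t ^ 2 * g t) x = 2 * (deriv r x / r x) + deriv g x / g x := by
    rw [logDeriv_mul (f := fun t => r t ^ 2) x (pow_ne_zero 2 hrx) hgx
        ((hasDerivAt_self hr).differentiableAt.fun_pow 2) hg,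
      logDeriv_fun_pow (hasDerivAt_self hr).differentiableAt, logDeriv_apply, logDeriv_apply,
      Nat.cast_ofNat]
  have h_first := hg.hasDerivAt.fun_mul (hasDerivAt_deriv hr)
  have h_second := hg.hasDerivAt.fun_mul (hasDerivAt_self hr)
  rw [product_rule.deriv_eq, h_log, h_first.deriv, ((h_first.fun_mul (hasDerivAt_self hφ)).fun_add
    (h_second.fun_mul (hasDerivAt_deriv hφ))).deriv]
  field_simp
  ring

section Separation

variable {n : ℕ}

lemma pd_update (i : Fin n) (f : (Fin n → ℝ) → ℝ) (u : Fin n → ℝ) (t : ℝ) :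
    pd i f (update u i t) = deriv (fun s => f (update u i s)) t := by
  have line_eq (s : ℝ) : update u i t + s • Pi.single i 1 = update u i (t + s) := by
    ext l
    obtain rfl | hl := eq_or_ne l i <;> simp [*]
  simp only [pd, lineDeriv, line_eq]
  rw [deriv_comp_const_add (f := fun s => f (update u i s)), add_zero]

lemma pd_eq_deriv_update (i : Fin n) (f : (Fin n → ℝ) → ℝ) (u : Fin n → ℝ) :
    pd i f u = deriv (fun s => f (update u i s)) (u i) := by
  rw [← pd_update, update_eq_self]

-- Since `∂ᵢf` depends on `uⁱ` only, the increments of `f` along `eⱼ` do not depend on `uⁱ`.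
lemma pd_pd_eq_zero_of_pd_eq {I : Fin n → Set ℝ} (hIo : ∀ i, IsOpen (I i))
    {f : (Fin n → ℝ) → ℝ} (hf : DifferentiableOn ℝ f (univ.pi I))
    {i j : Fin n} (hIi : IsPreconnected (I i)) (hij : i ≠ j) {a : ℝ → ℝ}
    (hpd : ∀ u ∈ univ.pi I, pd i f u = a (u i))
    {u : Fin n → ℝ} (hu : u ∈ univ.pi I) : pd i (pd j f) u = 0 := by
  have update_mem {v : Fin n → ℝ} (hv : v ∈ univ.pi I) {l : Fin n} {t : ℝ} (ht : t ∈ I l) :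
      update v l t ∈ univ.pi I := (update_mem_pi_iff_of_mem hv).2 fun _ => ht
  have differentiableOn_slice {v : Fin n → ℝ} (hv : v ∈ univ.pi I) :
      DifferentiableOn ℝ (fun t => f (update v i t)) (I i) :=
    hf.comp (fun t _ => (hasDerivAt_update v i t).differentiableAt.differentiableWithinAt)
      fun t ht => update_mem hv ht
  have deriv_slice {v : Fin n → ℝ} (hv : v ∈ univ.pi I) :
      EqOn (deriv fun t => f (update v i t)) a (I i) := fun t ht => by
    rw [← pd_update, hpd _ (update_mem hv ht), update_self]
  have increment_eq {s t : ℝ} (hs : s ∈ I j) (ht : t ∈ I i) :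
      f (update (update u i t) j s) = f (update u i t) + (f (update u j s) - f u) := by
    have hus := update_mem hu hs
    obtain ⟨c, hc⟩ := (hIo i).exists_eq_add_of_deriv_eq hIi (differentiableOn_slice hus)
      (differentiableOn_slice hu) ((deriv_slice hus).trans (deriv_slice hu).symm)
    have hct := hc ht
    have hcu := hc (hu i trivial)
    simp only [update_eq_self, update_comm hij.symm] at hct hcu
    linarith
  have pd_j_eq {t : ℝ} (ht : t ∈ I i) : pd j f (update u i t) = pd j f u := by
    have : (fun s => f (update (update u i t) j s)) =ᶠ[𝓝 (u j)]
        fun s => f (update u i t) + (f (update u j s) - f u) := by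
      filter_upwards [(hIo j).mem_nhds (hu j trivial)] with s hs using increment_eq hs ht
    rw [pd_eq_deriv_update, update_of_ne hij.symm, this.deriv_eq, deriv_const_add,
      deriv_sub_const, ← pd_eq_deriv_update]
  rw [pd_eq_deriv_update, EqOn.deriv (g := fun _ => pd j f u) (fun t ht => pd_j_eq ht) (hIo i)
    (hu i trivial), deriv_const]

lemma differentiableAt_comp_update {f : (Fin n → ℝ) → ℝ} {u : Fin n → ℝ}
    (hf : DifferentiableAt ℝ f u) (i : Fin n) :
    DifferentiableAt ℝ (fun t => f (update u i t)) (u i) :=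
  DifferentiableAt.comp (u i) (by simpa using hf) (hasDerivAt_update u i _).differentiableAt

lemma prod_apply_update {ι M : Type*} {X : ι → Type*} [Fintype ι] [DecidableEq ι] [CommMonoid M]
    (φ : ∀ l, X l → M) (u : ∀ l, X l) (i : ι) (t : X i) :
    ∏ l, φ l (update u i t l) = φ i t * ∏ l ∈ Finset.univ.erase i, φ l (u l) := by
  rw [← Finset.mul_prod_erase _ _ (Finset.mem_univ i), update_self]
  congr 1
  exact Finset.prod_congr rfl fun l hl => by rw [update_of_ne (Finset.ne_of_mem_erase hl)]

lemma pd_log_eq_logDeriv {i : Fin n} {f : (Fin n → ℝ) → ℝ} {u : Fin n → ℝ}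
    (hf : DifferentiableAt ℝ f u) (hfu : f u ≠ 0) :
    pd i (fun v => Real.log (f v)) u = logDeriv (fun t => f (update u i t)) (u i) := by
  rw [pd_eq_deriv_update]
  exact Real.deriv_log_comp_eq_logDeriv (f := fun t => f (update u i t))
    (differentiableAt_comp_update hf i) (by simpa using hfu)

lemma pd_mul_pd_mul_prod {g R : (Fin n → ℝ) → ℝ} {φ : Fin n → ℝ → ℝ} {u : Fin n → ℝ} (i : Fin n)
    (hg : DifferentiableAt ℝ g u) (hR : ContDiffAt ℝ 2 R u) (hφ : ContDiffAt ℝ 2 (φ i) (u i))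
    (hgu : g u ≠ 0) (hRu : R u ≠ 0) :
    pd i (fun v => g v * pd i (fun w => R w * ∏ l, φ l (w l)) v) u =
      pd i (fun v => g v * pd i R v) u * ∏ l, φ l (u l) +
        g u * R u * (deriv (deriv (φ i)) (u i) +
          pd i (fun v => Real.log (R v ^ 2 * g v)) u * deriv (φ i) (u i)) *
            ∏ l ∈ Finset.univ.erase i, φ l (u l) := by
  set P := ∏ l ∈ Finset.univ.erase i, φ l (u l) with hP
  have hR2g : DifferentiableAt ℝ (fun v => R v ^ 2 * g v) u :=
    ((hR.differentiableAt two_ne_zero).fun_pow 2).fun_mul hg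
  have hR_slice : ContDiffAt ℝ 2 (fun t => R (update u i t)) (u i) :=
    ContDiffAt.comp (u i) (by simpa using hR) (contDiff_update 2 u i).contDiffAt
  have one_variable := deriv_mul_deriv_mul (differentiableAt_comp_update hg i) hR_slice hφ
    (by simpa using hgu) (by simpa using hRu)
  simp only [pd_log_eq_logDeriv hR2g (mul_ne_zero (pow_ne_zero 2 hRu) hgu),
    pd_eq_deriv_update i (fun v => g v * pd i _ v), pd_update, prod_apply_update,
    ← Finset.mul_prod_erase _ (fun l => φ l (u l)) (Finset.mem_univ i), ← hP,
    ← mul_assoc, deriv_mul_const_field]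
  rw [update_eq_self] at one_variable
  linear_combination P * one_variable

lemma differentiableAt_prod_div_sq {ι E : Type*} [Fintype ι] [NormedAddCommGroup E]
    [NormedSpace ℝ E] {H : ι → E → ℝ} {x : E} (hH : ∀ l, DifferentiableAt ℝ (H l) x) {i : ι}
    (hHi : H i x ≠ 0) : DifferentiableAt ℝ (fun y => (∏ l, H l y) / H i y ^ 2) x := by
  have := pow_ne_zero 2 hHi
  fun_prop (disch := assumption)

lemma differentiableAt_log_sq_mul_prod_div_sq {ι E : Type*} [Fintype ι] [NormedAddCommGroup E]
    [NormedSpace ℝ E] {H : ι → E → ℝ} {R : E → ℝ} {x : E} (hH : ∀ l, DifferentiableAt ℝ (H l) x)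
    (hHx : ∀ l, H l x ≠ 0) (hR : DifferentiableAt ℝ R x) (hRx : R x ≠ 0) (i : ι) :
    DifferentiableAt ℝ (fun y => Real.log (R y ^ 2 * (∏ l, H l y) / H i y ^ 2)) x := by
  simp only [mul_div_assoc]
  exact ((hR.fun_pow 2).fun_mul (differentiableAt_prod_div_sq hH (hHx i))).log
    (mul_ne_zero (pow_ne_zero 2 hRx)
      (div_ne_zero (Finset.prod_ne_zero_iff.2 fun l _ => hHx l) (pow_ne_zero 2 (hHx i))))

/-- The Laplace–Beltrami operator of the diagonal metric with Lamé coefficients `H`. -/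
noncomputable def laplaceBeltrami (H : Fin n → (Fin n → ℝ) → ℝ) (ψ : (Fin n → ℝ) → ℝ)
    (u : Fin n → ℝ) : ℝ :=
  (∏ l, H l u)⁻¹ * ∑ i, pd i (fun v => (∏ l, H l v) / H i v ^ 2 * pd i ψ v) u

lemma laplaceBeltrami_mul_prod {H : Fin n → (Fin n → ℝ) → ℝ} {R : (Fin n → ℝ) → ℝ}
    {φ : Fin n → ℝ → ℝ} {u : Fin n → ℝ} (hH : ∀ i, DifferentiableAt ℝ (H i) u)
    (hHu : ∀ i, H i u ≠ 0) (hR : ContDiffAt ℝ 2 R u) (hRu : R u ≠ 0)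
    (hφ : ∀ i, ContDiffAt ℝ 2 (φ i) (u i)) :
    laplaceBeltrami H (fun v => R v * ∏ l, φ l (v l)) u =
      laplaceBeltrami H R u * ∏ l, φ l (u l) +
        R u * ∑ i, (deriv (deriv (φ i)) (u i) +
          pd i (fun v => Real.log (R v ^ 2 * (∏ l, H l v) / H i v ^ 2)) u * deriv (φ i) (u i)) /
            H i u ^ 2 * ∏ l ∈ Finset.univ.erase i, φ l (u l) := by
  have hh : ∏ l, H l u ≠ 0 := Finset.prod_ne_zero_iff.2 fun l _ => hHu l
  have weight_ne_zero (i : Fin n) : (∏ l, H l u) / H i u ^ 2 ≠ 0 :=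
    div_ne_zero hh (pow_ne_zero 2 (hHu i))
  simp only [laplaceBeltrami, mul_div_assoc,
    fun i => pd_mul_pd_mul_prod i (differentiableAt_prod_div_sq hH (hHu i)) hR (hφ i)
      (weight_ne_zero i) hRu,
    Finset.sum_add_distrib, ← Finset.sum_mul, mul_add, mul_assoc]
  congr 1
  rw [Finset.mul_sum, Finset.mul_sum]
  refine Finset.sum_congr rfl fun i _ => ?_
  have := hHu i
  field_simp

lemma laplaceBeltrami_mul_prod_of_ode {H : Fin n → (Fin n → ℝ) → ℝ} {R : (Fin n → ℝ) → ℝ}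
    {φ : Fin n → ℝ → ℝ} {u p q : Fin n → ℝ} (hH : ∀ i, DifferentiableAt ℝ (H i) u)
    (hHu : ∀ i, H i u ≠ 0) (hR : ContDiffAt ℝ 2 R u) (hRu : R u ≠ 0)
    (hφ : ∀ i, ContDiffAt ℝ 2 (φ i) (u i))
    (hode : ∀ i, deriv (deriv (φ i)) (u i) + p i * deriv (φ i) (u i) + q i * φ i (u i) = 0)
    (hφu : ∀ i, φ i (u i) = 1) :
    laplaceBeltrami H (fun v => R v * ∏ l, φ l (v l)) u =
      laplaceBeltrami H R u - (∑ i, q i / H i u ^ 2) * R u + ∑ i, R u / H i u ^ 2 *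
        (pd i (fun v => Real.log (R v ^ 2 * (∏ l, H l v) / H i v ^ 2)) u - p i) *
          deriv (φ i) (u i) := by
  have deriv_deriv_φ (i : Fin n) :
      deriv (deriv (φ i)) (u i) = -p i * deriv (φ i) (u i) - q i := by
    linear_combination hode i - q i * hφu i
  simp only [laplaceBeltrami_mul_prod hH hHu hR hRu hφ, deriv_deriv_φ, hφu,
    Finset.prod_const_one, mul_one]
  rw [sub_add, Finset.sum_mul, Finset.mul_sum, ← Finset.sum_sub_distrib, sub_eq_add_neg,
    ← Finset.sum_neg_distrib]
  congr 1
  exact Finset.sum_congr rfl fun i _ => by ring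

lemma eq_zero_of_forall_add_sum_mul_eq_zero {ι S : Type*} [Fintype ι] [Semiring S]
    {a : S} {b : ι → S} (h : ∀ d : ι → S, a + ∑ i, b i * d i = 0) : a = 0 ∧ b = 0 := by
  classical
  have ha : a = 0 := by simpa using h 0
  refine ⟨ha, funext fun i => ?_⟩
  simpa [ha, Pi.single_apply] using h (Pi.single i 1)

theorem R_equation_and_pd_log_eq_of_forall_separated {I : Fin n → Set ℝ}
    (hIo : ∀ i, IsOpen (I i)) (hIc : ∀ i, (I i).OrdConnected) {H : Fin n → (Fin n → ℝ) → ℝ}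
    {R : (Fin n → ℝ) → ℝ} {u : Fin n → ℝ} (hu : ∀ i, u i ∈ I i)
    (hH : ∀ i, DifferentiableAt ℝ (H i) u) (hHu : ∀ i, H i u ≠ 0)
    (hR : ContDiffAt ℝ 2 R u) (hRu : R u ≠ 0) {p q : Fin n → ℝ → ℝ}
    (hp : ∀ i, ContinuousOn (p i) (I i)) (hq : ∀ i, ContinuousOn (q i) (I i)) {w : ℝ}
    (hsep : ∀ φ : Fin n → ℝ → ℝ, (∀ i, ContDiffOn ℝ 2 (φ i) (I i)) →
      (∀ i, ∀ x ∈ I i, deriv (deriv (φ i)) x + p i x * deriv (φ i) x + q i x * φ i x = 0) →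
      laplaceBeltrami H (fun v => R v * ∏ l, φ l (v l)) u + w * (R u * ∏ l, φ l (u l)) = 0) :
    laplaceBeltrami H R u + (w - ∑ i, q i (u i) / H i u ^ 2) * R u = 0 ∧
      ∀ i, pd i (fun v => Real.log (R v ^ 2 * (∏ l, H l v) / H i v ^ 2)) u = p i (u i) := by
  have affine_eq_zero (d : Fin n → ℝ) :
      laplaceBeltrami H R u + (w - ∑ i, q i (u i) / H i u ^ 2) * R u + ∑ i, R u / H i u ^ 2 *
        (pd i (fun v => Real.log (R v ^ 2 * (∏ l, H l v) / H i v ^ 2)) u - p i (u i)) *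
          d i = 0 := by
    choose φ hφ hode hφu hφ'u using fun i =>
      exists_contDiffOn_two_linear_ode (hIo i) (hIc i) (hp i) (hq i) (hu i) 1 (d i)
    have laplace_eq := laplaceBeltrami_mul_prod_of_ode hH hHu hR hRu
      (fun i => (hφ i).contDiffAt ((hIo i).mem_nhds (hu i))) (fun i => hode i (u i) (hu i)) hφu
    have laplace_add := hsep φ hφ hode
    simp only [hφu, Finset.prod_const_one, hφ'u] at laplace_eq laplace_add
    linear_combination laplace_add - laplace_eq
  obtain ⟨R_equation, coeff_eq_zero⟩ := eq_zero_of_forall_add_sum_mul_eq_zero affine_eq_zero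
  refine ⟨R_equation, fun i => sub_eq_zero.1 ?_⟩
  exact (mul_eq_zero.1 (congrFun coeff_eq_zero i)).resolve_left
    (div_ne_zero hRu (pow_ne_zero 2 (hHu i)))

theorem R_separability_necessary_general {I : Fin n → Set ℝ} (hIo : ∀ i, IsOpen (I i))
    (hIc : ∀ i, (I i).OrdConnected) {H : Fin n → (Fin n → ℝ) → ℝ}
    (hH : ∀ i, DifferentiableOn ℝ (H i) (univ.pi I)) (hHne : ∀ i, ∀ u ∈ univ.pi I, H i u ≠ 0)
    {W R : (Fin n → ℝ) → ℝ} (hR : ContDiffOn ℝ 2 R (univ.pi I)) (hRne : ∀ u ∈ univ.pi I, R u ≠ 0)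
    {p q : Fin n → ℝ → ℝ} (hp : ∀ i, ContinuousOn (p i) (I i))
    (hq : ∀ i, ContinuousOn (q i) (I i))
    (hsep : ∀ φ : Fin n → ℝ → ℝ, (∀ i, ContDiffOn ℝ 2 (φ i) (I i)) →
      (∀ i, ∀ x ∈ I i, deriv (deriv (φ i)) x + p i x * deriv (φ i) x + q i x * φ i x = 0) →
      ∀ u ∈ univ.pi I, laplaceBeltrami H (fun v => R v * ∏ l, φ l (v l)) u +
        W u * (R u * ∏ l, φ l (u l)) = 0) :
    (∀ i, ∀ u ∈ univ.pi I,
      pd i (fun v => Real.log (R v ^ 2 * (∏ l, H l v) / H i v ^ 2)) u = p i (u i)) ∧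
    (∀ i j : Fin n, j ≠ i → ∀ u ∈ univ.pi I,
      pd i (pd j fun v => Real.log (R v ^ 2 * (∏ l, H l v) / H i v ^ 2)) u = 0) ∧
    (∀ u ∈ univ.pi I,
      laplaceBeltrami H R u + (W u - ∑ i, q i (u i) / H i u ^ 2) * R u = 0) := by
  have box_mem_nhds {u : Fin n → ℝ} (hu : u ∈ univ.pi I) : univ.pi I ∈ 𝓝 u :=
    (isOpen_set_pi finite_univ fun i _ => hIo i).mem_nhds hu
  have H_differentiableAt {u : Fin n → ℝ} (hu : u ∈ univ.pi I) (i : Fin n) :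
      DifferentiableAt ℝ (H i) u := (hH i).differentiableAt (box_mem_nhds hu)
  have R_contDiffAt {u : Fin n → ℝ} (hu : u ∈ univ.pi I) : ContDiffAt ℝ 2 R u :=
    hR.contDiffAt (box_mem_nhds hu)
  have pointwise {u : Fin n → ℝ} (hu : u ∈ univ.pi I) :=
    R_equation_and_pd_log_eq_of_forall_separated hIo hIc (fun i => hu i trivial)
      (H_differentiableAt hu) (fun i => hHne i u hu) (R_contDiffAt hu) (hRne u hu) hp hq
      fun φ hφ hode => hsep φ hφ hode u hu
  have log_differentiableOn (i : Fin n) : DifferentiableOn ℝ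
      (fun v => Real.log (R v ^ 2 * (∏ l, H l v) / H i v ^ 2)) (univ.pi I) := fun u hu =>
    (differentiableAt_log_sq_mul_prod_div_sq (H_differentiableAt hu) (fun l => hHne l u hu)
      ((R_contDiffAt hu).differentiableAt two_ne_zero) (hRne u hu) i).differentiableWithinAt
  exact ⟨fun i u hu => (pointwise hu).2 i,
    fun i j hji u hu => pd_pd_eq_zero_of_pd_eq hIo (log_differentiableOn i)
      (hIc i).isPreconnected hji.symm (fun v hv => (pointwise hv).2 i) hu,
    fun u hu => (pointwise hu).1⟩

end Separation

/-- **Necessity of the two conditions of R-separability (Theorem 3, "only if" part).**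
On an open box `U = I₁ × ⋯ × Iₙ` with diagonal metric given by smooth positive Lamé
coefficients `Hᵢ`, `h = H₁⋯Hₙ` and `Δψ = h⁻¹ ∑ᵢ ∂ᵢ((h/Hᵢ²)∂ᵢψ)`: if for EVERY choice of
`C²` solutions `φᵢ` of `φᵢ'' + pᵢφᵢ' + qᵢφᵢ = 0` the function `ψ = R·∏ᵢφᵢ(uⁱ)` satisfies
`Δψ + (k² - V)ψ = 0` on `U`, then `∂ᵢ ln(R² h/Hᵢ²) = pᵢ(uⁱ)` on `U` (hence the mixed
second logarithmic derivatives vanish) and the `R`-equation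
`ΔR + (k² - V - ∑ᵢ qᵢ/Hᵢ²) R = 0` holds on `U`. -/
theorem R_separability_necessary (n : ℕ) (hn : 2 ≤ n)
    (I : Fin n → Set ℝ) (hIo : ∀ i, IsOpen (I i)) (hIc : ∀ i, (I i).OrdConnected)
    (U : Set (Fin n → ℝ)) (hU : U = {u | ∀ i, u i ∈ I i})
    (H : Fin n → (Fin n → ℝ) → ℝ) (hH : ∀ i, ContDiffOn ℝ (⊤ : ℕ∞) (H i) U)
    (hHpos : ∀ i, ∀ u ∈ U, 0 < H i u)
    (h : (Fin n → ℝ) → ℝ) (hh : ∀ u, h u = ∏ i, H i u)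
    (V : (Fin n → ℝ) → ℝ) (hV : ContinuousOn V U) (k : ℝ)
    (R : (Fin n → ℝ) → ℝ) (hR : ContDiffOn ℝ (⊤ : ℕ∞) R U) (hRne : ∀ u ∈ U, R u ≠ 0)
    (p q : Fin n → ℝ → ℝ)
    (hp : ∀ i, ContinuousOn (p i) (I i)) (hq : ∀ i, ContinuousOn (q i) (I i))
    (hsep : ∀ φ : Fin n → ℝ → ℝ,
      (∀ i, ContDiffOn ℝ 2 (φ i) (I i)) →
      (∀ i, ∀ x ∈ I i,
        deriv (deriv (φ i)) x + p i x * deriv (φ i) x + q i x * φ i x = 0) →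
      ∀ u ∈ U,
        (h u)⁻¹ * ∑ i, pd i
            (fun v => h v / H i v ^ 2 * pd i (fun w => R w * ∏ l, φ l (w l)) v) u
          + (k ^ 2 - V u) * (R u * ∏ l, φ l (u l)) = 0) :
    (∀ i, ∀ u ∈ U,
      pd i (fun v => Real.log (R v ^ 2 * h v / H i v ^ 2)) u = p i (u i)) ∧
    (∀ i j : Fin n, j ≠ i → ∀ u ∈ U,
      pd i (pd j fun v => Real.log (R v ^ 2 * h v / H i v ^ 2)) u = 0) ∧
    (∀ u ∈ U,
      (h u)⁻¹ * ∑ i, pd i (fun v => h v / H i v ^ 2 * pd i R v) u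
        + (k ^ 2 - V u - ∑ i, q i (u i) / H i u ^ 2) * R u = 0) := by
  obtain rfl : h = fun u => ∏ i, H i u := funext hh
  obtain rfl : U = univ.pi I := hU.trans (ext fun _ => mem_univ_pi.symm)
  exact R_separability_necessary_general (W := fun u => k ^ 2 - V u) hIo hIc
    (fun i => (hH i).differentiableOn (by simp)) (fun i u hu => (hHpos i u hu).ne')
    (hR.of_le (WithTop.coe_le_coe.2 le_top)) hRne hp hq hsep
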